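/- Let v_1, v_2, ..., v_d ∈ Ω be linearly independent vectors. Then the map B : ℝ^{d−1} → ∂A defined by B(r_1, ..., r_{d−1}) = Σ_{i=1}^{d−1} r_i v_i − ψ_{v_d}(Σ_{i=1}^{d−1} r_i v_i) · v_d is a homeomorphism from ℝ^{d−1} onto the boundary ∂A (with its subspace topology). -/

import Mathlib

/-!
Let `ψ x = sup {t | x - t • a ∈ A}` with `a` in the interior of the cone `P`. Since `A + P ⊆ A`,
moving from a point of `A` in the direction `a` leads at once into `interior A`. Hence `s ≤ ψ x`
exactly when `x - s • a ∈ A`, and `s < ψ x` exactly when `x - s • a ∈ interior A`. As `A` is closed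
and `interior A` is open, `ψ` is both upper and lower semicontinuous, and the case `s = 0` shows
that `frontier A` is the zero set of `ψ`. Together with `ψ (x - t • a) = ψ x - t`, this says that
every line parallel to `a` meets `frontier A` in exactly one point. So the projection along `a` is a
continuous inverse of `x ↦ x - ψ x • a` on any topological complement of the line `ℝ a`.
-/

open Filter Set Topology
open scoped Pointwise

/-- The function `ψ_a` of a set `A`: the largest `t` for which `x - t • a` lies in `A`, negative if
`x` has to be moved in the direction `a` to reach `A`. The supremum has the junk value `0` if there
are no such `t` or arbitrarily large ones, which `IsEpigraphAlong` excludes. -/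
noncomputable def depthAlong {E : Type*} [AddCommGroup E] [Module ℝ E] (A : Set E) (a x : E) : ℝ :=
  sSup {t : ℝ | x - t • a ∈ A}

/-- `A` is a closed set which every line parallel to `a` enters once, going directly into the
interior: geometrically, the epigraph of a continuous function in the direction `a`. A proper
nonempty `P`-module has this property for every `a` in the interior of `P`. -/
structure IsEpigraphAlong {E : Type*} [AddCommGroup E] [Module ℝ E] [TopologicalSpace E]
    (A : Set E) (a : E) : Prop where
  isClosed : IsClosed A
  add_smul_mem_interior : ∀ x ∈ A, ∀ t : ℝ, 0 < t → x + t • a ∈ interior A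
  nonempty_ray : ∀ x, {t : ℝ | x - t • a ∈ A}.Nonempty
  bddAbove_ray : ∀ x, BddAbove {t : ℝ | x - t • a ∈ A}

lemma add_mem_interior_of_add_mem {G : Type*} [AddGroup G] [TopologicalSpace G] [ContinuousAdd G]
    {P A : Set G} (hA : ∀ x ∈ A, ∀ p ∈ P, x + p ∈ A) {x p : G} (hx : x ∈ A) (hp : p ∈ interior P) :
    x + p ∈ interior A := by
  have hsub : x +ᵥ P ⊆ A := vadd_set_subset_iff.2 fun q hq => hA x hx q hq
  have hmem : x + p ∈ interior (x +ᵥ P) := by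
    rw [interior_vadd]
    exact vadd_mem_vadd_set hp
  exact interior_mono hsub hmem

section Cone

variable {E : Type*} [AddCommGroup E] [Module ℝ E] [TopologicalSpace E] [ContinuousSMul ℝ E]
  {P A : Set E} {a : E}

lemma smul_mem_interior_of_cone (hP : ∀ c : ℝ, 0 < c → ∀ x ∈ P, c • x ∈ P) (ha : a ∈ interior P)
    {t : ℝ} (ht : 0 < t) : t • a ∈ interior P := by
  have hsub : t • P ⊆ P := smul_set_subset_iff.2 fun x hx => hP t ht x hx
  have hmem : t • a ∈ interior (t • P) := by
    rw [interior_smul₀ ht.ne']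
    exact smul_mem_smul_set ha
  exact interior_mono hsub hmem

variable [IsTopologicalAddGroup E]

lemma exists_add_smul_mem_of_cone (hP : ∀ c : ℝ, 0 < c → ∀ x ∈ P, c • x ∈ P)
    (ha : a ∈ interior P) (y : E) : ∃ t : ℝ, y + t • a ∈ P := by
  have hlim : Tendsto (fun t : ℝ => t⁻¹ • y + a) atTop (𝓝 a) := by
    simpa using ((tendsto_inv_atTop_zero (𝕜 := ℝ)).smul_const y).add_const a
  obtain ⟨t, htP, ht⟩ :=
    ((hlim.eventually (mem_interior_iff_mem_nhds.1 ha)).and (eventually_gt_atTop 0)).exists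
  refine ⟨t, ?_⟩
  simpa only [smul_add, smul_inv_smul₀ ht.ne'] using hP t ht _ htP

lemma add_smul_mem_interior_of_cone (hP : ∀ c : ℝ, 0 < c → ∀ x ∈ P, c • x ∈ P)
    (hA : ∀ x ∈ A, ∀ p ∈ P, x + p ∈ A) (ha : a ∈ interior P) {x : E} (hx : x ∈ A) {t : ℝ}
    (ht : 0 < t) : x + t • a ∈ interior A :=
  add_mem_interior_of_add_mem hA hx (smul_mem_interior_of_cone hP ha ht)

lemma nonempty_setOf_sub_smul_mem (hP : ∀ c : ℝ, 0 < c → ∀ x ∈ P, c • x ∈ P)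
    (hA : ∀ x ∈ A, ∀ p ∈ P, x + p ∈ A) (ha : a ∈ interior P) (hne : A.Nonempty) (x : E) :
    {t : ℝ | x - t • a ∈ A}.Nonempty := by
  obtain ⟨y, hy⟩ := hne
  obtain ⟨t, ht⟩ := exists_add_smul_mem_of_cone hP ha (x - y)
  have hsum : y + (x - y + t • a) = x - (-t) • a := by module
  have hmem : x - (-t) • a ∈ A := hsum ▸ hA y hy _ ht
  exact ⟨-t, hmem⟩

lemma bddAbove_setOf_sub_smul_mem (hP : ∀ c : ℝ, 0 < c → ∀ x ∈ P, c • x ∈ P)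
    (hA : ∀ x ∈ A, ∀ p ∈ P, x + p ∈ A) (ha : a ∈ interior P) (hproper : A ≠ univ) (x : E) :
    BddAbove {t : ℝ | x - t • a ∈ A} := by
  obtain ⟨y, hy⟩ := (ne_univ_iff_exists_notMem A).1 hproper
  obtain ⟨t, ht⟩ := exists_add_smul_mem_of_cone hP ha (y - x)
  refine ⟨t, fun s hs => not_lt.1 fun hts => hy ?_⟩
  have hsum : x - s • a + (y - x + t • a) + (s - t) • a = y := by module
  exact hsum ▸ interior_subset
    (add_smul_mem_interior_of_cone hP hA ha (hA _ hs _ ht) (sub_pos.2 hts))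

lemma isEpigraphAlong_of_cone (hP : ∀ c : ℝ, 0 < c → ∀ x ∈ P, c • x ∈ P)
    (hA : ∀ x ∈ A, ∀ p ∈ P, x + p ∈ A) (ha : a ∈ interior P) (hne : A.Nonempty)
    (hclosed : IsClosed A) (hproper : A ≠ univ) : IsEpigraphAlong A a where
  isClosed := hclosed
  add_smul_mem_interior _ hx _ ht := add_smul_mem_interior_of_cone hP hA ha hx ht
  nonempty_ray := nonempty_setOf_sub_smul_mem hP hA ha hne
  bddAbove_ray := bddAbove_setOf_sub_smul_mem hP hA ha hproper

end Cone

namespace IsEpigraphAlong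

variable {E : Type*} [AddCommGroup E] [Module ℝ E] [TopologicalSpace E]
  [IsTopologicalAddGroup E] [ContinuousSMul ℝ E] {A : Set E} {a x : E} {s : ℝ}

lemma sub_depthAlong_smul_mem (h : IsEpigraphAlong A a) (x : E) :
    x - depthAlong A a x • a ∈ A := by
  have hray : IsClosed {t : ℝ | x - t • a ∈ A} := h.isClosed.preimage (by fun_prop)
  exact hray.csSup_mem (h.nonempty_ray x) (h.bddAbove_ray x)

lemma sub_smul_mem_interior_of_lt_depthAlong (h : IsEpigraphAlong A a)
    (hs : s < depthAlong A a x) : x - s • a ∈ interior A := by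
  have hsum : x - depthAlong A a x • a + (depthAlong A a x - s) • a = x - s • a := by module
  exact hsum ▸ h.add_smul_mem_interior _ (h.sub_depthAlong_smul_mem x) _ (sub_pos.2 hs)

lemma le_depthAlong_iff (h : IsEpigraphAlong A a) :
    s ≤ depthAlong A a x ↔ x - s • a ∈ A := by
  refine ⟨fun hs => ?_, fun hs => le_csSup (h.bddAbove_ray x) hs⟩
  rcases hs.eq_or_lt with rfl | hlt
  · exact h.sub_depthAlong_smul_mem x
  · exact interior_subset (h.sub_smul_mem_interior_of_lt_depthAlong hlt)

lemma lt_depthAlong_iff (h : IsEpigraphAlong A a) :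
    s < depthAlong A a x ↔ x - s • a ∈ interior A := by
  refine ⟨h.sub_smul_mem_interior_of_lt_depthAlong, fun hs => ?_⟩
  have hray : Continuous fun t : ℝ => x - t • a := by fun_prop
  obtain ⟨t, hst, ht⟩ := (hray.continuousAt.eventually_mem (isOpen_interior.mem_nhds hs)).exists_gt
  exact hst.trans_le (h.le_depthAlong_iff.2 (interior_subset ht))

lemma continuous_depthAlong (h : IsEpigraphAlong A a) : Continuous (depthAlong A a) := by
  rw [continuous_iff_lower_upperSemicontinuous, lowerSemicontinuous_iff_isOpen_preimage,
    upperSemicontinuous_iff_isClosed_preimage]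
  refine ⟨fun s => ?_, fun s => ?_⟩
  · have hset : depthAlong A a ⁻¹' Ioi s = (fun x => x - s • a) ⁻¹' interior A :=
      ext fun _ => h.lt_depthAlong_iff
    exact hset ▸ isOpen_interior.preimage (by fun_prop)
  · have hset : depthAlong A a ⁻¹' Ici s = (fun x => x - s • a) ⁻¹' A :=
      ext fun _ => h.le_depthAlong_iff
    exact hset ▸ h.isClosed.preimage (by fun_prop)

lemma mem_frontier_iff_depthAlong_eq_zero (h : IsEpigraphAlong A a) :
    x ∈ frontier A ↔ depthAlong A a x = 0 := by
  have hmem : x ∈ A ↔ 0 ≤ depthAlong A a x := by simp [h.le_depthAlong_iff]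
  have hmem_interior : x ∈ interior A ↔ 0 < depthAlong A a x := by simp [h.lt_depthAlong_iff]
  rw [h.isClosed.frontier_eq, Set.mem_sdiff, hmem, hmem_interior, not_lt, and_comm,
    ← le_antisymm_iff]

lemma depthAlong_sub_smul (h : IsEpigraphAlong A a) (x : E) (t : ℝ) :
    depthAlong A a (x - t • a) = depthAlong A a x - t := by
  refine eq_of_forall_le_iff fun s => ?_
  have hsum : x - t • a - s • a = x - (s + t) • a := by module
  rw [h.le_depthAlong_iff, hsum, le_sub_iff_add_le, h.le_depthAlong_iff]

lemma sub_depthAlong_smul_mem_frontier (h : IsEpigraphAlong A a) (x : E) :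
    x - depthAlong A a x • a ∈ frontier A := by
  rw [h.mem_frontier_iff_depthAlong_eq_zero, h.depthAlong_sub_smul, sub_self]

variable {F : Type*} [AddCommGroup F] [Module ℝ F] [TopologicalSpace F]

/-- The frontier of `A` as a graph: if `Φ` splits `E` as `F × ℝ` with `a` as the unit vector of the
second factor, every point of `F` is moved along `a` until it hits the frontier. -/
noncomputable def homeomorphFrontier (h : IsEpigraphAlong A a) (Φ : (F × ℝ) ≃L[ℝ] E)
    (hΦ : Φ (0, 1) = a) : F ≃ₜ frontier A where
  toFun r := ⟨Φ (r, 0) - depthAlong A a (Φ (r, 0)) • a, h.sub_depthAlong_smul_mem_frontier _⟩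
  invFun x := (Φ.symm x).1
  left_inv r := by simp [← hΦ]
  right_inv x := by
    have hfoot : Φ ((Φ.symm x).1, 0) = x - (Φ.symm x).2 • a := by
      rw [← hΦ, ← map_smul, eq_sub_iff_add_eq, ← map_add]
      simp
    have hdepth : depthAlong A a x = 0 := h.mem_frontier_iff_depthAlong_eq_zero.1 x.2
    apply Subtype.ext
    simp only [hfoot, h.depthAlong_sub_smul, hdepth]
    module
  continuous_toFun := by
    have hdepth := h.continuous_depthAlong
    fun_prop
  continuous_invFun := by fun_prop

@[simp]
lemma coe_homeomorphFrontier (h : IsEpigraphAlong A a) (Φ : (F × ℝ) ≃L[ℝ] E)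
    (hΦ : Φ (0, 1) = a) (r : F) :
    (h.homeomorphFrontier Φ hΦ r : E) = Φ (r, 0) - depthAlong A a (Φ (r, 0)) • a :=
  rfl

end IsEpigraphAlong

section SplitLast

variable {E : Type*} [AddCommGroup E] [Module ℝ E] [TopologicalSpace E]
  [IsTopologicalAddGroup E] [ContinuousSMul ℝ E] [T2Space E] {n : ℕ}

/-- The coordinates of `E` in a basis indexed by `Fin (n + 1)`, with the last one split off. -/
noncomputable def prodEquivOfBasis (b : Module.Basis (Fin (n + 1)) ℝ E) :
    (EuclideanSpace ℝ (Fin n) × ℝ) ≃L[ℝ] E :=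
  haveI : FiniteDimensional ℝ E := b.finiteDimensional_of_finite
  (((EuclideanSpace.basisFun (Fin n) ℝ).toBasis.prod (Module.Basis.singleton (Fin 1) ℝ)).equiv b
    finSumFinEquiv).toContinuousLinearEquiv

lemma prodEquivOfBasis_apply (b : Module.Basis (Fin (n + 1)) ℝ E) (r : EuclideanSpace ℝ (Fin n))
    (s : ℝ) :
    prodEquivOfBasis b (r, s) = ∑ i : Fin n, r i • b i.castSucc + s • b (Fin.last n) := by
  set c := (EuclideanSpace.basisFun (Fin n) ℝ).toBasis.prod (Module.Basis.singleton (Fin 1) ℝ)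
  calc
    prodEquivOfBasis b (r, s) = c.equiv b finSumFinEquiv (∑ j, c.repr (r, s) j • c j) := by
      rw [c.sum_repr]
      rfl
    _ = ∑ j, c.repr (r, s) j • b (finSumFinEquiv j) := by
      simp only [map_sum, map_smul, Module.Basis.equiv_apply]
    _ = ∑ i : Fin n, r i • b i.castSucc + s • b (Fin.last n) := by
      have hlast : Fin.natAdd n (0 : Fin 1) = Fin.last n := rfl
      simp [c, hlast, Fin.castSucc]

end SplitLast

theorem stmt_11_general {E : Type*} [AddCommGroup E] [Module ℝ E] [TopologicalSpace E]
    [IsTopologicalAddGroup E] [ContinuousSMul ℝ E] [T2Space E] {n : ℕ} {P A : Set E}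
    (hP : ∀ c : ℝ, 0 < c → ∀ x ∈ P, c • x ∈ P) (hne : A.Nonempty) (hclosed : IsClosed A)
    (hA : ∀ x ∈ A, ∀ p ∈ P, x + p ∈ A) (hproper : A ≠ univ) (b : Module.Basis (Fin (n + 1)) ℝ E)
    (ha : b (Fin.last n) ∈ interior P) :
    ∃ h : EuclideanSpace ℝ (Fin n) ≃ₜ frontier A, ∀ r : EuclideanSpace ℝ (Fin n),
      (h r : E) = (∑ i : Fin n, r i • b i.castSucc) -
        depthAlong A (b (Fin.last n)) (∑ i : Fin n, r i • b i.castSucc) • b (Fin.last n) := by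
  have hepi : IsEpigraphAlong A (b (Fin.last n)) :=
    isEpigraphAlong_of_cone hP hA ha hne hclosed hproper
  have hlast : prodEquivOfBasis b (0, 1) = b (Fin.last n) := by simp [prodEquivOfBasis_apply]
  refine ⟨hepi.homeomorphFrontier (prodEquivOfBasis b) hlast, fun r => ?_⟩
  simp [prodEquivOfBasis_apply]

/-- Let `P ⊆ ℝ^d` (`d = n+1`) be a closed convex cone spanning `ℝ^d`, containing no
line, with interior `Ω`, and `A` a `P`-module with `A ≠ ℝ^d`. Given linearly
independent `v_1, …, v_d ∈ Ω`, the map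
`B(r) = ∑_{i<d} r_i v_i − ψ_{v_d}(∑_{i<d} r_i v_i) • v_d` (where
`ψ_a x = sup {t | x - t • a ∈ A}`) is a homeomorphism of `ℝ^{d-1}` onto `∂A`. -/
theorem stmt_11 {n : ℕ} (P A : Set (EuclideanSpace ℝ (Fin (n + 1))))
    (hPclosed : IsClosed P) (hPconvex : Convex ℝ P)
    (hPcone : ∀ c : ℝ, 0 ≤ c → ∀ x ∈ P, c • x ∈ P)
    (hPspan : Submodule.span ℝ P = ⊤)
    (hPline : ∀ x ∈ P, -x ∈ P → x = 0)
    (hAne : A.Nonempty) (hAclosed : IsClosed A)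
    (hAmod : ∀ x ∈ A, ∀ p ∈ P, x + p ∈ A)
    (hAproper : A ≠ Set.univ)
    (v : Fin (n + 1) → EuclideanSpace ℝ (Fin (n + 1)))
    (hvΩ : ∀ i, v i ∈ interior P) (hvind : LinearIndependent ℝ v) :
    ∃ h : EuclideanSpace ℝ (Fin n) ≃ₜ frontier A,
      ∀ r : EuclideanSpace ℝ (Fin n),
        (h r : EuclideanSpace ℝ (Fin (n + 1))) =
          (∑ i : Fin n, r i • v i.castSucc) -
            sSup {t : ℝ | (∑ i : Fin n, r i • v i.castSucc) - t • v (Fin.last n) ∈ A}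
              • v (Fin.last n) := by
  simpa [depthAlong] using stmt_11_general (fun c hc => hPcone c hc.le) hAne hAclosed hAmod
    hAproper (basisOfLinearIndependentOfCardEqFinrank hvind (by simp)) (by simpa using hvΩ _)
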